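/- Minimizers ρ_ε* of E_ε converge narrowly (along a subsequence) as ε → 0 to a minimizer ρ* of E, which is supported in M; moreover the convergence holds in the 2-Wasserstein distance. -/

import Mathlib

open Metric MeasureTheory Filter Topology

noncomputable section

/-- Squared 2-Wasserstein distance, as the infimum of the quadratic transport cost
over couplings. -/
def W2sq {E : Type*} [MeasurableSpace E] [PseudoMetricSpace E]
    (μ ν : Measure E) : ℝ :=
  sInf ((fun π : Measure (E × E) => ∫ p, dist p.1 p.2 ^ 2 ∂π) ''
    {π | IsProbabilityMeasure π ∧ π.map Prod.fst = μ ∧ π.map Prod.snd = ν})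

variable {d : ℕ}

/-- The ε-interaction energy. -/
def Eeps (M : Set (EuclideanSpace ℝ (Fin d))) (W : EuclideanSpace ℝ (Fin d) → ℝ)
    (ε : ℝ) (ρ : Measure (EuclideanSpace ℝ (Fin d))) : ℝ :=
  (1 / 2) * ∫ x, ∫ y, W (x - y) ∂ρ ∂ρ + (1 / ε) * ∫ x, infDist x M ^ 2 ∂ρ

/-- The interaction energy. -/
def Eint (W : EuclideanSpace ℝ (Fin d) → ℝ) (ρ : Measure (EuclideanSpace ℝ (Fin d))) : ℝ :=
  (1 / 2) * ∫ x, ∫ y, W (x - y) ∂ρ ∂ρ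

/-!
Comparing a minimizer `μ_ε` with any `ν` supported in `M` bounds its interaction energy by that of
`ν`, and `∫ infDist(x, M)² dμ_ε` by `ε` times that energy. Since `infDist(·, M)` is proper, the
`μ_ε` are tight, and lower semicontinuity under narrow convergence of integrals of nonnegative
continuous functions shows that a limit point is supported in `M` and minimizes the interaction
energy. The distance to `M` also controls the Wasserstein distance: a partition of unity of `M` into
pieces of small diameter yields couplings of `μ_ε` with the limit `μ` that move little outside a set
of small measure `η`, where the squared cost at `(x, y)`, `y ∈ M`, is at most
`2 infDist(x, M)² + 2 (diam M)²`. The total cost is thus at most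
`δ² + 2 ∫ infDist(x, M)² dμ_ε + 2 (diam M)² η`.
-/

open scoped ENNReal NNReal

section Coupling

variable {X Y : Type*} [MeasurableSpace X] [MeasurableSpace Y]

/-- `π` is a coupling (transport plan) of `μ` and `ν`: a measure on the product with these
marginals. -/
structure IsCoupling (π : Measure (X × Y)) (μ : Measure X) (ν : Measure Y) : Prop where
  map_fst : π.map Prod.fst = μ
  map_snd : π.map Prod.snd = ν

lemma IsCoupling.isProbabilityMeasure {π : Measure (X × Y)} {μ : Measure X} {ν : Measure Y}
    [IsProbabilityMeasure μ] (h : IsCoupling π μ ν) : IsProbabilityMeasure π :=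
  ⟨by rw [← Measure.fst_univ, Measure.fst, h.map_fst, measure_univ]⟩

/-- The largest multiple of the product measure whose marginals are dominated by `μ` and `ν`. It
is the independent coupling of `μ` and `ν` when they have the same mass, and a partial one
otherwise. -/
def rescaledProd (μ : Measure X) (ν : Measure Y) : Measure (X × Y) :=
  (max (μ Set.univ) (ν Set.univ))⁻¹ • μ.prod ν

variable (μ : Measure X) (ν : Measure Y)

lemma map_fst_rescaledProd_le [SFinite ν] : (rescaledProd μ ν).map Prod.fst ≤ μ := by
  rw [rescaledProd, Measure.map_smul, Measure.map_fst_prod, smul_smul]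
  refine Measure.le_iff.2 fun s _ => mul_le_of_le_one_left' ?_
  calc (max (μ Set.univ) (ν Set.univ))⁻¹ * ν Set.univ
      ≤ (ν Set.univ)⁻¹ * ν Set.univ := by gcongr; exact le_max_right _ _
    _ ≤ 1 := ENNReal.inv_mul_le_one _

lemma map_snd_rescaledProd_le [SFinite ν] : (rescaledProd μ ν).map Prod.snd ≤ ν := by
  rw [rescaledProd, Measure.map_smul, Measure.map_snd_prod, smul_smul]
  refine Measure.le_iff.2 fun s _ => mul_le_of_le_one_left' ?_
  calc (max (μ Set.univ) (ν Set.univ))⁻¹ * μ Set.univ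
      ≤ (μ Set.univ)⁻¹ * μ Set.univ := by gcongr; exact le_max_left _ _
    _ ≤ 1 := ENNReal.inv_mul_le_one _

variable [IsFiniteMeasure μ] [IsFiniteMeasure ν]

lemma rescaledProd_univ :
    rescaledProd μ ν Set.univ = min (μ Set.univ) (ν Set.univ) := by
  rw [rescaledProd, Measure.smul_apply, ← Set.univ_prod_univ, Measure.prod_prod, smul_eq_mul,
    ← min_mul_max (μ Set.univ), mul_left_comm]
  rcases eq_or_ne (max (μ Set.univ) (ν Set.univ)) 0 with h | h
  · have hμ : μ Set.univ = 0 := nonpos_iff_eq_zero.1 ((le_max_left _ _).trans_eq h)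
    rw [hμ, zero_min, zero_mul]
  · rw [ENNReal.inv_mul_cancel h (max_lt (measure_lt_top μ _) (measure_lt_top ν _)).ne, mul_one]

variable {μ ν}

lemma isCoupling_rescaledProd (h : μ Set.univ = ν Set.univ) :
    IsCoupling (rescaledProd μ ν) μ ν where
  map_fst :=
    have := isFiniteMeasure_of_le _ (map_fst_rescaledProd_le μ ν)
    Measure.eq_of_le_of_measure_univ_eq (map_fst_rescaledProd_le μ ν) <| by
      rw [← Measure.fst, Measure.fst_univ, rescaledProd_univ, h, min_self]
  map_snd :=
    have := isFiniteMeasure_of_le _ (map_snd_rescaledProd_le μ ν)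
    Measure.eq_of_le_of_measure_univ_eq (map_snd_rescaledProd_le μ ν) <| by
      rw [← Measure.snd, Measure.snd_univ, rescaledProd_univ, h, min_self]

lemma exists_isCoupling_ge (hμν : μ Set.univ = ν Set.univ) {π₀ : Measure (X × Y)}
    (hfst : π₀.map Prod.fst ≤ μ) (hsnd : π₀.map Prod.snd ≤ ν) :
    ∃ π, π₀ ≤ π ∧ IsCoupling π μ ν := by
  have := isFiniteMeasure_of_le μ hfst
  have := isFiniteMeasure_of_le ν hsnd
  have hmass : (μ - π₀.map Prod.fst) Set.univ = (ν - π₀.map Prod.snd) Set.univ := by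
    rw [Measure.sub_apply .univ hfst, Measure.sub_apply .univ hsnd, ← Measure.fst,
      Measure.fst_univ, ← Measure.snd, Measure.snd_univ, hμν]
  have hrest := isCoupling_rescaledProd hmass
  refine ⟨π₀ + rescaledProd (μ - π₀.map Prod.fst) (ν - π₀.map Prod.snd),
    Measure.le_add_right le_rfl, ?_, ?_⟩
  · rw [Measure.map_add _ _ measurable_fst, hrest.map_fst, add_comm,
      Measure.sub_add_cancel_of_le hfst]
  · rw [Measure.map_add _ _ measurable_snd, hrest.map_snd, add_comm,
      Measure.sub_add_cancel_of_le hsnd]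

lemma sum_withDensity_le {ι : Type*} [Fintype ι] {φ : ι → X → ℝ≥0∞} (μ : Measure X)
    (hφ : ∀ i, Measurable (φ i)) (hsum : ∀ x, ∑ i, φ i x ≤ 1) :
    ∑ i, μ.withDensity (φ i) ≤ μ := by
  refine Measure.le_iff.2 fun s hs => ?_
  calc (∑ i, μ.withDensity (φ i)) s = ∫⁻ x in s, ∑ i, φ i x ∂μ := by
        simp only [Measure.finsetSum_apply, withDensity_apply _ hs,
          lintegral_finsetSum _ fun i _ => hφ i]
    _ ≤ ∫⁻ _ in s, 1 ∂μ := lintegral_mono hsum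
    _ = μ s := setLIntegral_one s

lemma ae_rescaledProd_withDensity_mem {φ : X → ℝ≥0∞} {ψ : Y → ℝ≥0∞} {s : Set (X × Y)}
    (μ : Measure X) (ν : Measure Y) (hφ : Measurable φ) (hψ : Measurable ψ)
    (hs : ∀ x y, φ x ≠ 0 → ψ y ≠ 0 → (x, y) ∈ s) :
    ∀ᵐ p ∂rescaledProd (μ.withDensity φ) (ν.withDensity ψ), p ∈ s := by
  have hφ0 : ∀ᵐ x ∂μ.withDensity φ, φ x ≠ 0 := (ae_withDensity_iff hφ).2 (.of_forall fun _ => id)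
  have hψ0 : ∀ᵐ y ∂ν.withDensity ψ, ψ y ≠ 0 := (ae_withDensity_iff hψ).2 (.of_forall fun _ => id)
  refine Measure.ae_smul_measure ?_ _
  filter_upwards [Measure.quasiMeasurePreserving_fst.ae hφ0,
    Measure.quasiMeasurePreserving_snd.ae hψ0] with p hx hy using hs _ _ hx hy

/- On each block `φ i ⊗ ψ i`, which lies in `s`, a mass `min (∫ φ i ∂μ) (∫ ψ i ∂ν)` can be coupled;
only the remaining mass has to be coupled without control. -/
lemma exists_isCoupling_measure_compl_le {ι : Type*} [Fintype ι] (μ : Measure X) (ν : Measure Y)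
    [IsProbabilityMeasure μ] [IsProbabilityMeasure ν] {φ : ι → X → ℝ≥0∞} {ψ : ι → Y → ℝ≥0∞}
    (hφ : ∀ i, Measurable (φ i)) (hψ : ∀ i, Measurable (ψ i)) (hφ1 : ∀ x, ∑ i, φ i x ≤ 1)
    (hψ1 : ∀ y, ∑ i, ψ i y ≤ 1) {s : Set (X × Y)} (hsm : MeasurableSet s)
    (hs : ∀ i x y, φ i x ≠ 0 → ψ i y ≠ 0 → (x, y) ∈ s) :
    ∃ π, IsCoupling π μ ν ∧ π sᶜ ≤ 1 - ∑ i, min (∫⁻ x, φ i x ∂μ) (∫⁻ y, ψ i y ∂ν) := by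
  have hμφ := sum_withDensity_le μ hφ hφ1
  have hνψ := sum_withDensity_le ν hψ hψ1
  have : ∀ i, IsFiniteMeasure (μ.withDensity (φ i)) := fun i => isFiniteMeasure_of_le μ <|
    (Finset.single_le_sum (fun _ _ => Measure.zero_le _) (Finset.mem_univ i)).trans hμφ
  have : ∀ i, IsFiniteMeasure (ν.withDensity (ψ i)) := fun i => isFiniteMeasure_of_le ν <|
    (Finset.single_le_sum (fun _ _ => Measure.zero_le _) (Finset.mem_univ i)).trans hνψ
  let block i := rescaledProd (μ.withDensity (φ i)) (ν.withDensity (ψ i))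
  have hfst : (∑ i, block i).map Prod.fst ≤ μ := by
    rw [Measure.map_finset_sum measurable_fst.aemeasurable]
    exact (Finset.sum_le_sum fun i _ => map_fst_rescaledProd_le _ _).trans hμφ
  have hsnd : (∑ i, block i).map Prod.snd ≤ ν := by
    rw [Measure.map_finset_sum measurable_snd.aemeasurable]
    exact (Finset.sum_le_sum fun i _ => map_snd_rescaledProd_le _ _).trans hνψ
  obtain ⟨π, hle, hπ⟩ := exists_isCoupling_ge (by simp) hfst hsnd
  have := hπ.isProbabilityMeasure
  refine ⟨π, hπ, ?_⟩
  rw [prob_compl_eq_one_sub hsm]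
  gcongr
  calc ∑ i, min (∫⁻ x, φ i x ∂μ) (∫⁻ y, ψ i y ∂ν) = ∑ i, block i s := by
        refine Finset.sum_congr rfl fun i _ => ?_
        have hblock : s =ᵐ[block i] Set.univ :=
          eventuallyEq_univ.2 (ae_rescaledProd_withDensity_mem μ ν (hφ i) (hψ i) (hs i))
        rw [measure_congr hblock, rescaledProd_univ]
        simp only [withDensity_apply _ MeasurableSet.univ, Measure.restrict_univ]
    _ = (∑ i, block i) s := (Measure.finsetSum_apply _ _ _).symm
    _ ≤ π s := hle s

end Coupling

section Wasserstein

variable {E : Type*} [PseudoMetricSpace E]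

lemma dist_sq_le_add_indicator {M : Set E} (hM : Bornology.IsBounded M) (δ : ℝ) {p : E × E}
    (hp : p.2 ∈ M) :
    ENNReal.ofReal (dist p.1 p.2 ^ 2) ≤
      ENNReal.ofReal (δ ^ 2) + (2 * ENNReal.ofReal (infDist p.1 M ^ 2) +
        {p : E × E | δ < dist p.1 p.2}.indicator
          (fun _ => 2 * ENNReal.ofReal (diam M ^ 2)) p) := by
  by_cases hδ : δ < dist p.1 p.2
  · refine le_add_left ?_
    have hp' : p ∈ {p : E × E | δ < dist p.1 p.2} := hδ
    rw [Set.indicator_of_mem hp', ← mul_add, ← ENNReal.ofReal_add (sq_nonneg _) (sq_nonneg _),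
      ← ENNReal.ofReal_ofNat 2, ← ENNReal.ofReal_mul zero_le_two]
    refine ENNReal.ofReal_le_ofReal (le_trans ?_ add_sq_le)
    gcongr
    exact dist_le_infDist_add_diam hM hp
  · refine le_add_right ?_
    gcongr
    exact not_lt.1 hδ

variable [MeasurableSpace E]

lemma W2sq_nonneg (μ ν : Measure E) : 0 ≤ W2sq μ ν := by
  refine Real.sInf_nonneg ?_
  rintro _ ⟨π, -, rfl⟩
  exact integral_nonneg fun p => by positivity

lemma ofReal_W2sq_le_lintegral [OpensMeasurableSpace (E × E)] {π : Measure (E × E)}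
    {μ ν : Measure E} [IsProbabilityMeasure μ] (hπ : IsCoupling π μ ν) :
    ENNReal.ofReal (W2sq μ ν) ≤ ∫⁻ p, ENNReal.ofReal (dist p.1 p.2 ^ 2) ∂π := by
  have hle : W2sq μ ν ≤ ∫ p, dist p.1 p.2 ^ 2 ∂π := by
    refine csInf_le ⟨0, ?_⟩ ⟨π, ⟨hπ.isProbabilityMeasure, hπ.map_fst, hπ.map_snd⟩, rfl⟩
    rintro _ ⟨π', -, rfl⟩
    exact integral_nonneg fun p => by positivity
  rw [integral_eq_lintegral_of_nonneg_ae (.of_forall fun p => by positivity) (by fun_prop)] at hle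
  exact ENNReal.ofReal_le_of_le_toReal hle

variable [BorelSpace E] [SecondCountableTopology E]

lemma IsCoupling.lintegral_dist_sq_le {π : Measure (E × E)} {μ ν : Measure E}
    [IsProbabilityMeasure μ] (hπ : IsCoupling π μ ν) {M : Set E} (hM : Bornology.IsBounded M)
    (hν : ν Mᶜ = 0) (δ : ℝ) :
    ∫⁻ p, ENNReal.ofReal (dist p.1 p.2 ^ 2) ∂π ≤
      ENNReal.ofReal (δ ^ 2) + (2 * ∫⁻ x, ENNReal.ofReal (infDist x M ^ 2) ∂μ +
        2 * ENNReal.ofReal (diam M ^ 2) * π {p | δ < dist p.1 p.2}) := by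
  have := hπ.isProbabilityMeasure
  have hM_ae : ∀ᵐ p ∂π, p.2 ∈ M := by
    refine ae_of_ae_map measurable_snd.aemeasurable (p := (· ∈ M)) ?_
    rw [hπ.map_snd]
    exact hν
  have hfar : MeasurableSet {p : E × E | δ < dist p.1 p.2} :=
    measurableSet_lt measurable_const measurable_dist
  have hinf : Measurable fun x : E => ENNReal.ofReal (infDist x M ^ 2) :=
    (measurable_infDist.pow_const 2).ennreal_ofReal
  have hinf_fst : Measurable fun p : E × E => ENNReal.ofReal (infDist p.1 M ^ 2) :=
    hinf.comp measurable_fst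
  calc _ ≤ _ := lintegral_mono_ae (hM_ae.mono fun p hp => dist_sq_le_add_indicator hM δ hp)
    _ = _ := by
      rw [lintegral_add_left measurable_const, lintegral_add_left (hinf_fst.const_mul 2),
        lintegral_const, measure_univ, mul_one, lintegral_const_mul 2 hinf_fst,
        lintegral_indicator_const hfar, ← hπ.map_fst, lintegral_map hinf measurable_fst]

end Wasserstein

section NarrowConvergence

variable {E : Type*} [MetricSpace E]

lemma exists_boundedContinuous_partition_of_isCompact {M : Set E} (hM : IsCompact M) {δ : ℝ}
    (hδ : 0 < δ) :
    ∃ (t : Finset E) (g : t → BoundedContinuousFunction E ℝ≥0), (∀ x, ∑ i, g i x ≤ 1) ∧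
      (∀ x ∈ M, ∑ i, g i x = 1) ∧ ∀ i x y, g i x ≠ 0 → g i y ≠ 0 → dist x y ≤ δ := by
  obtain ⟨t, -, hcov⟩ := hM.elim_nhds_subcover (ball · (δ / 2))
    fun x _ => ball_mem_nhds x (half_pos hδ)
  obtain ⟨f, hf⟩ := PartitionOfUnity.exists_isSubordinate hM.isClosed
    (fun i : t => ball (i : E) (δ / 2)) (fun _ => isOpen_ball)
    (by simpa only [Set.iUnion_subtype] using hcov)
  let g (i : t) : BoundedContinuousFunction E ℝ≥0 :=
    (BoundedContinuousFunction.ofNormedAddCommGroup (f i) (f i).continuous 1 fun x => by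
      rw [Real.norm_of_nonneg (f.nonneg i x)]; exact f.le_one i x).nnrealPart
  have hg : ∀ i x, (g i x : ℝ) = f i x := fun i x => Real.coe_toNNReal _ (f.nonneg i x)
  have hsum : ∀ x, ((∑ i, g i x : ℝ≥0) : ℝ) = ∑ᶠ i, f i x := fun x => by
    rw [finsum_eq_sum_of_fintype, NNReal.coe_sum]
    exact Finset.sum_congr rfl fun i _ => hg i x
  have hball : ∀ i x, g i x ≠ 0 → dist x i < δ / 2 := fun i x hx =>
    hf i (subset_tsupport _ fun h => hx (NNReal.eq ((hg i x).trans h)))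
  refine ⟨t, g, fun x => ?_, fun x hx => ?_, fun i x y hx hy => ?_⟩
  · exact NNReal.coe_le_coe.1 ((hsum x).trans_le (f.sum_le_one x))
  · exact NNReal.eq ((hsum x).trans (f.sum_eq_one hx))
  · linarith [dist_triangle_right x y i, hball i x hx, hball i y hy]

variable [MeasurableSpace E] [BorelSpace E] [SecondCountableTopology E]
  {ι : Type*} {l : Filter ι} {μ : ι → ProbabilityMeasure E} {ν : ProbabilityMeasure E}
  {M : Set E}

lemma exists_isCoupling_tendsto_measure_lt_dist (hμ : Tendsto μ l (𝓝 ν)) (hM : IsCompact M)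
    (hν : (ν : Measure E) Mᶜ = 0) {δ : ℝ} (hδ : 0 < δ) :
    ∃ π : ι → Measure (E × E), (∀ n, IsCoupling (π n) (μ n) ν) ∧
      Tendsto (fun n => π n {p | δ < dist p.1 p.2}) l (𝓝 0) := by
  obtain ⟨t, g, hle, heq, hdist⟩ := exists_boundedContinuous_partition_of_isCompact hM hδ
  have hmeas : ∀ i, Measurable fun x => (g i x : ℝ≥0∞) := fun i =>
    (g i).continuous.measurable.coe_nnreal_ennreal
  have hle' : ∀ x, ∑ i, (g i x : ℝ≥0∞) ≤ 1 := fun x => by exact_mod_cast hle x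
  have hnear : MeasurableSet {p : E × E | dist p.1 p.2 ≤ δ} :=
    measurableSet_le measurable_dist measurable_const
  choose π hπ hfar using fun n => exists_isCoupling_measure_compl_le (μ n : Measure E) ν hmeas hmeas
    hle' hle' hnear fun i x y hx hy =>
      hdist i x y (ENNReal.coe_ne_zero.1 hx) (ENNReal.coe_ne_zero.1 hy)
  have hmass : ∑ i, ∫⁻ x, g i x ∂(ν : Measure E) = 1 := by
    rw [← lintegral_finsetSum _ fun i _ => hmeas i]
    have hM_ae : ∀ᵐ x ∂(ν : Measure E), x ∈ M := hν
    have hsum : ∀ᵐ x ∂(ν : Measure E), ∑ i, (g i x : ℝ≥0∞) = 1 :=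
      hM_ae.mono fun x hx => by exact_mod_cast heq x hx
    rw [lintegral_congr_ae hsum, lintegral_one, measure_univ]
  have hmin : Tendsto (fun n => ∑ i, min (∫⁻ x, g i x ∂(μ n : Measure E))
      (∫⁻ x, g i x ∂(ν : Measure E))) l (𝓝 1) := by
    rw [← hmass]
    refine tendsto_finsetSum _ fun i _ => ?_
    simpa only [min_self] using
      (ProbabilityMeasure.tendsto_iff_forall_lintegral_tendsto.1 hμ (g i)).min
        (tendsto_const_nhds (x := ∫⁻ x, g i x ∂(ν : Measure E)))
  have hdefect := ENNReal.Tendsto.sub tendsto_const_nhds hmin (.inl ENNReal.one_ne_top)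
  rw [tsub_self] at hdefect
  refine ⟨π, hπ, tendsto_of_tendsto_of_tendsto_of_le_of_le tendsto_const_nhds hdefect
    (fun _ => zero_le) fun n => ?_⟩
  simpa only [Set.compl_ofPred, not_le] using hfar n

lemma tendsto_W2sq_of_tendsto_integral_infDist_sq (hμ : Tendsto μ l (𝓝 ν)) (hM : IsCompact M)
    (hν : (ν : Measure E) Mᶜ = 0)
    (hint : ∀ n, Integrable (fun x => infDist x M ^ 2) (μ n : Measure E))
    (hdist : Tendsto (fun n => ∫ x, infDist x M ^ 2 ∂(μ n : Measure E)) l (𝓝 0)) :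
    Tendsto (fun n => W2sq (μ n : Measure E) ν) l (𝓝 0) := by
  refine tendsto_order.2 ⟨fun a ha => .of_forall fun n => ha.trans_le (W2sq_nonneg _ _),
    fun r hr => ?_⟩
  obtain ⟨π, hπ, hfar⟩ :=
    exists_isCoupling_tendsto_measure_lt_dist hμ hM hν (Real.sqrt_pos.2 (half_pos hr))
  have hdist' : Tendsto (fun n => ∫⁻ x, ENNReal.ofReal (infDist x M ^ 2) ∂(μ n : Measure E)) l
      (𝓝 0) := by
    simpa only [ofReal_integral_eq_lintegral_ofReal (hint _) (.of_forall fun _ => sq_nonneg _),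
      ENNReal.ofReal_zero] using ENNReal.tendsto_ofReal hdist
  have hbound : Tendsto (fun n => ENNReal.ofReal (√(r / 2) ^ 2) +
      (2 * ∫⁻ x, ENNReal.ofReal (infDist x M ^ 2) ∂(μ n : Measure E) +
        2 * ENNReal.ofReal (diam M ^ 2) * π n {p | √(r / 2) < dist p.1 p.2})) l
      (𝓝 (ENNReal.ofReal (r / 2))) := by
    rw [Real.sq_sqrt (half_pos hr).le]
    have hnear := ENNReal.Tendsto.const_mul (a := 2) hdist' (.inr ENNReal.ofNat_ne_top)
    have hfar' := ENNReal.Tendsto.const_mul (a := 2 * ENNReal.ofReal (diam M ^ 2)) hfar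
      (.inr (ENNReal.mul_ne_top ENNReal.ofNat_ne_top ENNReal.ofReal_ne_top))
    simpa only [mul_zero, add_zero] using tendsto_const_nhds.add (hnear.add hfar')
  have hlt : ENNReal.ofReal (r / 2) < ENNReal.ofReal r :=
    (ENNReal.ofReal_lt_ofReal_iff hr).2 (half_lt_self hr)
  filter_upwards [hbound.eventually_lt_const hlt] with n hn
  refine (ENNReal.ofReal_lt_ofReal_iff hr).1 (lt_of_le_of_lt ?_ hn)
  exact (ofReal_W2sq_le_lintegral (hπ n)).trans
    ((hπ n).lintegral_dist_sq_le hM.isBounded hν _)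

end NarrowConvergence

section Tightness

variable {X : Type*} [TopologicalSpace X] [MeasurableSpace X]

lemma isTightMeasureSet_of_lintegral_le {S : Set (Measure X)} {f : X → ℝ≥0∞}
    (hf : Measurable f) (hf_top : Tendsto f (cocompact X) (𝓝 ⊤)) {C : ℝ≥0∞} (hC : C ≠ ⊤)
    (hS : ∀ μ ∈ S, ∫⁻ x, f x ∂μ ≤ C) : IsTightMeasureSet S := by
  rw [isTightMeasureSet_iff_exists_isCompact_measure_compl_le]
  intro η hη
  obtain ⟨t, hCt, ht⟩ := exists_between (ENNReal.div_lt_top hC hη.ne')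
  obtain ⟨K, hK, hKt⟩ := mem_cocompact.1 (hf_top.eventually (eventually_ge_nhds ht))
  refine ⟨K, hK, fun μ hμ => ?_⟩
  calc μ Kᶜ ≤ μ {x | t ≤ f x} := measure_mono hKt
    _ ≤ (∫⁻ x, f x ∂μ) / t := meas_ge_le_lintegral_div hf.aemeasurable (pos_of_gt hCt).ne' ht.ne
    _ ≤ C / t := by gcongr; exact hS μ hμ
    _ ≤ η := ENNReal.div_le_of_le_mul' <|
      (ENNReal.div_le_iff_le_mul (.inl hη.ne') (.inr (pos_of_gt hCt).ne')).1 hCt.le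

variable {E : Type*} [PseudoMetricSpace E]

lemma tendsto_infDist_cocompact_atTop [ProperSpace E] {M : Set E} (hM : Bornology.IsBounded M)
    (hMne : M.Nonempty) : Tendsto (infDist · M) (cocompact E) atTop := by
  obtain ⟨m, hm⟩ := hMne
  refine tendsto_atTop_mono (fun x => ?_)
    (tendsto_atTop_add_const_right _ (-diam M) (tendsto_dist_right_cocompact_atTop m))
  linarith [dist_le_infDist_add_diam (x := x) hM hm]

variable [MeasurableSpace E]

lemma integrable_infDist_sq [OpensMeasurableSpace E] {μ : Measure E} [IsFiniteMeasure μ] {o : E}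
    (hμ : Integrable (fun x => dist x o ^ 2) μ) (M : Set E) :
    Integrable (fun x => infDist x M ^ 2) μ := by
  refine (((integrable_const (infDist o M ^ 2)).add hμ).const_mul 2).mono'
    (measurable_infDist.pow_const 2).aestronglyMeasurable (.of_forall fun x => ?_)
  rw [Real.norm_of_nonneg (sq_nonneg _)]
  refine le_trans ?_ add_sq_le
  gcongr
  · exact infDist_nonneg
  · exact infDist_le_infDist_add_dist

lemma integrable_dist_sq_of_measure_compl_eq_zero [OpensMeasurableSpace E] {M : Set E}
    (hM : Bornology.IsBounded M) {ν : Measure E} [IsFiniteMeasure ν] (hν : ν Mᶜ = 0) (o : E) :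
    Integrable (fun x => dist x o ^ 2) ν := by
  obtain ⟨r, hr⟩ := hM.subset_closedBall o
  have hM_ae : ∀ᵐ x ∂ν, x ∈ M := hν
  have hcont : Continuous fun x => dist x o ^ 2 := by fun_prop
  refine .of_bound hcont.measurable.aestronglyMeasurable (r ^ 2) (hM_ae.mono fun x hx => ?_)
  rw [Real.norm_of_nonneg (sq_nonneg _)]
  gcongr
  exact hr hx

lemma integral_infDist_sq_eq_zero {M : Set E} {ν : Measure E} (hν : ν Mᶜ = 0) :
    ∫ x, infDist x M ^ 2 ∂ν = 0 := by
  have hM_ae : ∀ᵐ x ∂ν, x ∈ M := hν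
  refine integral_eq_zero_of_ae (hM_ae.mono fun x hx => ?_)
  simp [infDist_zero_of_mem hx]

lemma measure_compl_eq_zero_of_integral_infDist_sq_le_zero {M : Set E} (hM : IsClosed M)
    (hMne : M.Nonempty) {ν : Measure E} (hint : Integrable (fun x => infDist x M ^ 2) ν)
    (hν : ∫ x, infDist x M ^ 2 ∂ν ≤ 0) : ν Mᶜ = 0 := by
  have hzero := (integral_eq_zero_iff_of_nonneg (fun _ => sq_nonneg _) hint).1
    (hν.antisymm (integral_nonneg fun _ => sq_nonneg _))
  have hM_ae : ∀ᵐ x ∂ν, x ∈ M :=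
    hzero.mono fun x hx => (hM.mem_iff_infDist_zero hMne).2 (pow_eq_zero_iff two_ne_zero |>.1 hx)
  exact hM_ae

lemma isTightMeasureSet_of_integral_infDist_sq_le [OpensMeasurableSpace E] [ProperSpace E]
    {M : Set E} (hM : Bornology.IsBounded M) (hMne : M.Nonempty) {S : Set (Measure E)}
    (hint : ∀ μ ∈ S, Integrable (fun x => infDist x M ^ 2) μ) {C : ℝ}
    (hS : ∀ μ ∈ S, ∫ x, infDist x M ^ 2 ∂μ ≤ C) : IsTightMeasureSet S := by
  refine isTightMeasureSet_of_lintegral_le (measurable_infDist.pow_const 2).ennreal_ofReal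
    (ENNReal.tendsto_ofReal_atTop.comp <|
      (tendsto_pow_atTop two_ne_zero).comp (tendsto_infDist_cocompact_atTop hM hMne))
    ENNReal.ofReal_ne_top (C := ENNReal.ofReal C) fun μ hμ => ?_
  rw [← ofReal_integral_eq_lintegral_ofReal (hint μ hμ) (.of_forall fun _ => sq_nonneg _)]
  exact ENNReal.ofReal_le_ofReal (hS μ hμ)

end Tightness

section LowerSemicontinuity

variable {X : Type*} [TopologicalSpace X] [HasOuterApproxClosed X] [MeasurableSpace X]
  [OpensMeasurableSpace X] {μ : ℕ → ProbabilityMeasure X} {ν : ProbabilityMeasure X}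

lemma integrable_and_integral_le_of_tendsto (hμ : Tendsto μ atTop (𝓝 ν)) {f : X → ℝ}
    (hf : Continuous f) (hf0 : 0 ≤ f) (hint : ∀ n, Integrable f (μ n : Measure X)) {c : ℕ → ℝ}
    {a : ℝ} (hle : ∀ n, ∫ x, f x ∂(μ n : Measure X) ≤ c n) (hc : Tendsto c atTop (𝓝 a)) :
    Integrable f (ν : Measure X) ∧ ∫ x, f x ∂(ν : Measure X) ≤ a := by
  have ha : 0 ≤ a := ge_of_tendsto' hc fun n => (integral_nonneg hf0).trans (hle n)
  have hlin : ∫⁻ x, ENNReal.ofReal (f x) ∂(ν : Measure X) ≤ ENNReal.ofReal a := calc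
    _ ≤ liminf (fun n => ∫⁻ x, ENNReal.ofReal (f x) ∂(μ n : Measure X)) atTop :=
        lintegral_le_liminf_lintegral_of_forall_isOpen_measure_le_liminf_measure hf hf0
          fun _ hG => ProbabilityMeasure.le_liminf_measure_open_of_tendsto hμ hG
    _ ≤ liminf (fun n => ENNReal.ofReal (c n)) atTop := by
        refine liminf_le_liminf (.of_forall fun n => ?_)
        rw [← ofReal_integral_eq_lintegral_ofReal (hint n) (.of_forall hf0)]
        exact ENNReal.ofReal_le_ofReal (hle n)
    _ = ENNReal.ofReal a := (ENNReal.tendsto_ofReal hc).liminf_eq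
  have hmeas := hf.measurable.aestronglyMeasurable (μ := (ν : Measure X))
  refine ⟨⟨hmeas, (hasFiniteIntegral_iff_ofReal (.of_forall hf0)).2
    (hlin.trans_lt ENNReal.ofReal_lt_top)⟩, ?_⟩
  rw [integral_eq_lintegral_of_nonneg_ae (.of_forall hf0) hmeas]
  exact ENNReal.toReal_le_of_le_ofReal ha hlin

end LowerSemicontinuity

section Concentration

variable {E : Type*} [MetricSpace E] [ProperSpace E] [MeasurableSpace E] [BorelSpace E]

lemma exists_subseq_tendsto_of_tendsto_integral_infDist_sq {M : Set E} (hM : IsCompact M)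
    (hMne : M.Nonempty) {μ : ℕ → ProbabilityMeasure E}
    (hint : ∀ n, Integrable (fun x => infDist x M ^ 2) (μ n : Measure E))
    (hdist : Tendsto (fun n => ∫ x, infDist x M ^ 2 ∂(μ n : Measure E)) atTop (𝓝 0)) :
    ∃ (σ : ℕ → ℕ) (ν : ProbabilityMeasure E), StrictMono σ ∧ (ν : Measure E) Mᶜ = 0 ∧
      Tendsto (μ ∘ σ) atTop (𝓝 ν) := by
  obtain ⟨C, hC⟩ := hdist.bddAbove_range
  have htight : IsTightMeasureSet {((ρ : ProbabilityMeasure E) : Measure E) | ρ ∈ Set.range μ} := by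
    refine isTightMeasureSet_of_integral_infDist_sq_le hM.isBounded hMne (C := C) ?_ ?_
    · rintro _ ⟨_, ⟨n, rfl⟩, rfl⟩
      exact hint n
    · rintro _ ⟨_, ⟨n, rfl⟩, rfl⟩
      exact hC ⟨n, rfl⟩
  obtain ⟨ν, -, σ, hσ, hν⟩ := (isCompact_closure_of_isTightMeasureSet htight).tendsto_subseq
    (x := μ) fun n => subset_closure ⟨n, rfl⟩
  obtain ⟨hintν, hleν⟩ := integrable_and_integral_le_of_tendsto hν
    ((continuous_infDist_pt M).pow 2) (fun _ => sq_nonneg _) (fun n => hint (σ n))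
    (fun _ => le_rfl) (hdist.comp hσ.tendsto_atTop)
  exact ⟨σ, ν, hσ, measure_compl_eq_zero_of_integral_infDist_sq_le_zero hM.isClosed hMne hintν hleν,
    hν⟩

end Concentration

section Energy

variable {E : Type*} [MeasurableSpace E] {k : E → E → ℝ}

/-- The interaction energy of `μ` for the pair kernel `k`; `Eint W` is the case
`k x y = W (x - y)`. -/
def interactionEnergy (k : E → E → ℝ) (μ : Measure E) : ℝ :=
  (1 / 2) * ∫ x, ∫ y, k x y ∂μ ∂μ

lemma interactionEnergy_nonneg (hk0 : ∀ x y, 0 ≤ k x y) (μ : Measure E) :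
    0 ≤ interactionEnergy k μ :=
  mul_nonneg one_half_pos.le (integral_nonneg fun x => integral_nonneg (hk0 x))

lemma interactionEnergy_eq_integral_prod {μ : Measure E} [SFinite μ]
    (hk : Integrable (Function.uncurry k) (μ.prod μ)) :
    interactionEnergy k μ = (1 / 2) * ∫ p, Function.uncurry k p ∂μ.prod μ :=
  congrArg ((1 / 2) * ·) (integral_prod _ hk).symm

lemma interactionEnergy_le_of_tendsto [TopologicalSpace E] [SecondCountableTopology E]
    [TopologicalSpace.PseudoMetrizableSpace E] [BorelSpace E] {μ : ℕ → ProbabilityMeasure E}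
    {ν : ProbabilityMeasure E} (hμ : Tendsto μ atTop (𝓝 ν)) (hk : Continuous (Function.uncurry k))
    (hk0 : ∀ x y, 0 ≤ k x y)
    (hint : ∀ n, Integrable (Function.uncurry k) ((μ n : Measure E).prod (μ n))) {a : ℝ}
    (hle : ∀ n, interactionEnergy k (μ n) ≤ a) : interactionEnergy k ν ≤ a := by
  have hprod : Tendsto (fun n => (μ n).prod (μ n)) atTop (𝓝 (ν.prod ν)) :=
    (ProbabilityMeasure.continuous_prod.tendsto (ν, ν)).comp (hμ.prodMk_nhds hμ)
  have hle' : ∀ n, ∫ p, Function.uncurry k p ∂(μ n : Measure E).prod (μ n) ≤ 2 * a := fun n => by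
    linarith [hle n, interactionEnergy_eq_integral_prod (hint n)]
  obtain ⟨hintν, hleν⟩ := integrable_and_integral_le_of_tendsto hprod hk
    (fun p => hk0 p.1 p.2) hint hle' tendsto_const_nhds
  rw [ProbabilityMeasure.toMeasure_prod] at hintν hleν
  linarith [interactionEnergy_eq_integral_prod hintν]

variable [PseudoMetricSpace E]

lemma integrable_uncurry_of_le_dist_sq [OpensMeasurableSpace (E × E)]
    (hk : Continuous (Function.uncurry k)) (hk0 : ∀ x y, 0 ≤ k x y) {C : ℝ}
    (hkC : ∀ x y, k x y ≤ C * (1 + dist x y ^ 2)) {μ : Measure E} [IsFiniteMeasure μ] {o : E}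
    (hμ : Integrable (fun x => dist x o ^ 2) μ) :
    Integrable (Function.uncurry k) (μ.prod μ) := by
  have hC : 0 ≤ C := by simpa using (hk0 o o).trans (hkC o o)
  refine (((integrable_const 1).add
    (((hμ.comp_fst μ).add (hμ.comp_snd μ)).const_mul 2)).const_mul C).mono'
    hk.measurable.aestronglyMeasurable (.of_forall fun ⟨x, y⟩ => ?_)
  rw [Function.uncurry_apply_pair, Real.norm_of_nonneg (hk0 x y)]
  calc k x y ≤ C * (1 + dist x y ^ 2) := hkC x y
    _ ≤ C * (1 + (dist x o + dist y o) ^ 2) := by gcongr; exact dist_triangle_right x y o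
    _ ≤ C * (1 + 2 * (dist x o ^ 2 + dist y o ^ 2)) := by gcongr; exact add_sq_le

/-- The interaction energy with the penalization `ε⁻¹ ∫ infDist(x, M)² dμ` of the mass away from
`M`; `Eeps M W ε` is the case `k x y = W (x - y)`. -/
def penalizedEnergy (M : Set E) (k : E → E → ℝ) (ε : ℝ) (μ : Measure E) : ℝ :=
  interactionEnergy k μ + (1 / ε) * ∫ x, infDist x M ^ 2 ∂μ

lemma penalizedEnergy_eq_interactionEnergy {M : Set E} {ν : Measure E} (hν : ν Mᶜ = 0)
    (k : E → E → ℝ) (ε : ℝ) : penalizedEnergy M k ε ν = interactionEnergy k ν := by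
  rw [penalizedEnergy, integral_infDist_sq_eq_zero hν, mul_zero, add_zero]

/-- `μ` minimizes `penalizedEnergy M k ε` among the probability measures with finite second
moment. The moment is taken about a base point `o`, whose choice is immaterial. -/
structure IsPenalizedMinimizer (o : E) (M : Set E) (k : E → E → ℝ) (ε : ℝ) (μ : Measure E) :
    Prop where
  isProbabilityMeasure : IsProbabilityMeasure μ
  integrable_dist_sq : Integrable (fun x => dist x o ^ 2) μ
  penalizedEnergy_le : ∀ ν : Measure E, IsProbabilityMeasure ν →
    Integrable (fun x => dist x o ^ 2) ν → penalizedEnergy M k ε μ ≤ penalizedEnergy M k ε ν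

namespace IsPenalizedMinimizer

variable [OpensMeasurableSpace E] {o : E} {M : Set E} {ε : ℝ} {μ ν : Measure E}
  [IsProbabilityMeasure ν]

lemma penalizedEnergy_le_interactionEnergy (h : IsPenalizedMinimizer o M k ε μ)
    (hM : Bornology.IsBounded M) (hν : ν Mᶜ = 0) :
    penalizedEnergy M k ε μ ≤ interactionEnergy k ν :=
  (h.penalizedEnergy_le ν inferInstance
    (integrable_dist_sq_of_measure_compl_eq_zero hM hν o)).trans_eq
    (penalizedEnergy_eq_interactionEnergy hν k ε)

lemma interactionEnergy_le (h : IsPenalizedMinimizer o M k ε μ) (hε : 0 < ε)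
    (hM : Bornology.IsBounded M) (hν : ν Mᶜ = 0) :
    interactionEnergy k μ ≤ interactionEnergy k ν := by
  refine le_trans (le_add_of_nonneg_right ?_) (h.penalizedEnergy_le_interactionEnergy hM hν)
  exact mul_nonneg (one_div_pos.2 hε).le (integral_nonneg fun _ => sq_nonneg _)

lemma integral_infDist_sq_le (h : IsPenalizedMinimizer o M k ε μ) (hk0 : ∀ x y, 0 ≤ k x y)
    (hε : 0 < ε) (hM : Bornology.IsBounded M) (hν : ν Mᶜ = 0) :
    ∫ x, infDist x M ^ 2 ∂μ ≤ ε * interactionEnergy k ν := by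
  have hpen : (1 / ε) * ∫ x, infDist x M ^ 2 ∂μ ≤ interactionEnergy k ν :=
    (le_add_of_nonneg_left (interactionEnergy_nonneg hk0 μ)).trans
      (h.penalizedEnergy_le_interactionEnergy hM hν)
  rwa [one_div, inv_mul_le_iff₀ hε] at hpen

end IsPenalizedMinimizer

lemma tendsto_integral_infDist_sq_of_isPenalizedMinimizer [OpensMeasurableSpace E] {o : E}
    {M : Set E} (hM : Bornology.IsBounded M) (hMne : M.Nonempty) (hMm : MeasurableSet M)
    (hk0 : ∀ x y, 0 ≤ k x y) {ι : Type*} {l : Filter ι} {ε : ι → ℝ} (hε : ∀ n, 0 < ε n)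
    (hε0 : Tendsto ε l (𝓝 0)) {μ : ι → Measure E}
    (hμ : ∀ n, IsPenalizedMinimizer o M k (ε n) (μ n)) :
    Tendsto (fun n => ∫ x, infDist x M ^ 2 ∂μ n) l (𝓝 0) := by
  obtain ⟨m, hm⟩ := hMne
  have hdirac : Measure.dirac m Mᶜ = 0 := by
    rw [Measure.dirac_apply' _ hMm.compl, Set.indicator_of_notMem (Set.notMem_compl_iff.2 hm)]
  have hbound : Tendsto (fun n => ε n * interactionEnergy k (Measure.dirac m)) l (𝓝 0) := by
    simpa only [zero_mul] using hε0.mul_const (interactionEnergy k (Measure.dirac m))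
  exact squeeze_zero (fun n => integral_nonneg fun _ => sq_nonneg _)
    (fun n => (hμ n).integral_infDist_sq_le hk0 (hε n) hM hdirac) hbound

end Energy

theorem stmt6_general {E : Type*} [MetricSpace E] [ProperSpace E] [MeasurableSpace E] [BorelSpace E]
    {M : Set E} (hMne : M.Nonempty) (hMc : IsCompact M) {k : E → E → ℝ}
    (hk : Continuous (Function.uncurry k)) (hk0 : ∀ x y, 0 ≤ k x y)
    (hkgrowth : ∃ C, ∀ x y, k x y ≤ C * (1 + dist x y ^ 2)) {o : E} {ε : ℕ → ℝ}
    (hε : ∀ n, 0 < ε n) (hε0 : Tendsto ε atTop (𝓝 0)) {ρ : ℕ → Measure E}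
    (hρ : ∀ n, IsPenalizedMinimizer o M k (ε n) (ρ n)) :
    ∃ σ : ℕ → ℕ, StrictMono σ ∧ ∃ ρstar : Measure E,
      IsProbabilityMeasure ρstar ∧ ρstar Mᶜ = 0 ∧
      (∀ ν : Measure E, IsProbabilityMeasure ν → ν Mᶜ = 0 →
        interactionEnergy k ρstar ≤ interactionEnergy k ν) ∧
      (∀ f : E → ℝ, Continuous f → (∃ C, ∀ x, |f x| ≤ C) →
        Tendsto (fun n => ∫ x, f x ∂ρ (σ n)) atTop (𝓝 (∫ x, f x ∂ρstar))) ∧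
      Tendsto (fun n => W2sq (ρ (σ n)) ρstar) atTop (𝓝 0) := by
  obtain ⟨C, hC⟩ := hkgrowth
  let P n : ProbabilityMeasure E := ⟨ρ n, (hρ n).isProbabilityMeasure⟩
  have hint : ∀ n, Integrable (fun x => infDist x M ^ 2) (P n : Measure E) := fun n =>
    have := (hρ n).isProbabilityMeasure
    integrable_infDist_sq (hρ n).integrable_dist_sq M
  have hdist : Tendsto (fun n => ∫ x, infDist x M ^ 2 ∂(P n : Measure E)) atTop (𝓝 0) :=
    tendsto_integral_infDist_sq_of_isPenalizedMinimizer hMc.isBounded hMne hMc.measurableSet hk0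
      hε hε0 hρ
  obtain ⟨σ, ρstar, hσ, hsupp, hnarrow⟩ :=
    exists_subseq_tendsto_of_tendsto_integral_infDist_sq hMc hMne hint hdist
  refine ⟨σ, hσ, ρstar, inferInstance, hsupp, fun ν _ hν => ?_, fun f hf ⟨B, hB⟩ => ?_, ?_⟩
  · exact interactionEnergy_le_of_tendsto hnarrow hk hk0
      (fun n => integrable_uncurry_of_le_dist_sq hk hk0 hC (hρ (σ n)).integrable_dist_sq)
      fun n => (hρ (σ n)).interactionEnergy_le (hε (σ n)) hMc.isBounded hν
  · exact ProbabilityMeasure.tendsto_iff_forall_integral_tendsto.1 hnarrow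
      (.ofNormedAddCommGroup f hf B hB)
  · exact tendsto_W2sq_of_tendsto_integral_infDist_sq (μ := P ∘ σ) hnarrow hMc hsupp
      (fun n => hint (σ n)) (hdist.comp hσ.tendsto_atTop)

/-- Minimizers ρ_ε* of E_ε converge narrowly along a subsequence, and in 2-Wasserstein
distance, as ε → 0 to a minimizer ρ* of E supported in M. -/
theorem stmt6 (M : Set (EuclideanSpace ℝ (Fin d))) (hMne : M.Nonempty) (hMc : IsCompact M)
    (W : EuclideanSpace ℝ (Fin d) → ℝ) (hWc : Continuous W) (hW0 : ∀ x, 0 ≤ W x)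
    (hWsymm : ∀ x, W (-x) = W x) (hWgrowth : ∃ C, ∀ x, W x ≤ C * (1 + ‖x‖ ^ 2))
    (ρmin : ℝ → Measure (EuclideanSpace ℝ (Fin d)))
    (hmin : ∀ ε, 0 < ε →
      IsProbabilityMeasure (ρmin ε) ∧ Integrable (fun x => ‖x‖ ^ 2) (ρmin ε) ∧
      ∀ ρ : Measure (EuclideanSpace ℝ (Fin d)),
        IsProbabilityMeasure ρ → Integrable (fun x => ‖x‖ ^ 2) ρ →
        Eeps M W ε (ρmin ε) ≤ Eeps M W ε ρ) :
    ∃ εseq : ℕ → ℝ, (∀ n, 0 < εseq n) ∧ Tendsto εseq atTop (𝓝 0) ∧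
      ∃ ρstar : Measure (EuclideanSpace ℝ (Fin d)),
        IsProbabilityMeasure ρstar ∧ ρstar Mᶜ = 0 ∧
        (∀ ν : Measure (EuclideanSpace ℝ (Fin d)),
          IsProbabilityMeasure ν → ν Mᶜ = 0 → Eint W ρstar ≤ Eint W ν) ∧
        (∀ f : EuclideanSpace ℝ (Fin d) → ℝ, Continuous f → (∃ C, ∀ x, |f x| ≤ C) →
          Tendsto (fun n => ∫ x, f x ∂(ρmin (εseq n))) atTop (𝓝 (∫ x, f x ∂ρstar))) ∧
        Tendsto (fun n => W2sq (ρmin (εseq n)) ρstar) atTop (𝓝 0) := by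
  obtain ⟨C, hC⟩ := hWgrowth
  have hρ : ∀ n : ℕ, IsPenalizedMinimizer 0 M (fun x y => W (x - y)) (1 / (n + 1))
      (ρmin (1 / (n + 1))) := fun n => by
    obtain ⟨hprob, hmoment, hle⟩ := hmin _ (Nat.one_div_pos_of_nat (n := n))
    simp only [← dist_zero_right] at hmoment hle
    exact ⟨hprob, hmoment, hle⟩
  obtain ⟨σ, hσ, hlim⟩ := stmt6_general (k := fun x y => W (x - y)) hMne hMc
    (hWc.comp continuous_sub) (fun _ _ => hW0 _)
    ⟨C, fun x y => dist_eq_norm x y ▸ hC (x - y)⟩ (fun _ => Nat.one_div_pos_of_nat)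
    tendsto_one_div_add_atTop_nhds_zero_nat hρ
  exact ⟨fun n => 1 / (σ n + 1), fun _ => Nat.one_div_pos_of_nat,
    tendsto_one_div_add_atTop_nhds_zero_nat.comp hσ.tendsto_atTop, hlim⟩

end
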